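/- Let T > 0 and m₀ ∈ (0,1], and let T(m₀) ∈ [1/2,2] be the unique solution of |m₀| = (2T−1)²(T+4)/(27T) in [1/2,2]. Then the number of solutions M < 0 of the equation T²M³ − T(2−T)M² + (1−2T)M = m₀ is: zero if T < T(m₀), exactly one if T = T(m₀), and exactly two if T > T(m₀). -/

import Mathlib

/-!
For `T > 0` the cubic `M ↦ T²M³ - T(2-T)M² + (1-2T)M` has derivative `(3TM + 2T - 1)(TM - 1)`, so
it increases up to `c = (1-2T)/(3T)` and then decreases up to `1/T`. If `T ≤ 1/2` then `c ≥ 0`, so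
the cubic is negative on the negative axis. If `T > 1/2` then `c < 0`, and a level `m₀ > 0` is
attained on the negative axis zero, one or two times according to its position relative to the peak
value `(2T-1)²(T+4)/(27T)`. That peak value is strictly increasing in `T ≥ 1/2`, so comparing it
with `m₀` is the same as comparing `T` with `T(m₀)`.
-/

open Set

section Unimodal

variable {α β : Type*}

theorem apply_lt_apply_peak [LinearOrder α] [Preorder β] {f : α → β} {c b x : α}
    (hmono : StrictMonoOn f (Iic c)) (hanti : StrictAntiOn f (Icc c b)) (hxb : x ≤ b)
    (hxc : x ≠ c) : f x < f c := by
  rcases hxc.lt_or_gt with hlt | hgt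
  · exact hmono hlt.le self_mem_Iic hlt
  · exact hanti ⟨le_rfl, hgt.le.trans hxb⟩ ⟨hgt.le, hxb⟩ hgt

theorem ncard_level_eq_two_of_lt_peak [ConditionallyCompleteLinearOrder α] [TopologicalSpace α]
    [OrderTopology α] [DenselyOrdered α] [LinearOrder β] [TopologicalSpace β]
    [OrderClosedTopology β] {f : α → β} {a c b : α} {y : β} (hac : a ≤ c) (hcb : c ≤ b)
    (hcont : ContinuousOn f (Icc a b)) (hmono : StrictMonoOn f (Iic c))
    (hanti : StrictAntiOn f (Icc c b)) (hya : f a ≤ y) (hyb : f b < y) (hyc : y < f c) :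
    {x | x < b ∧ f x = y}.ncard = 2 := by
  obtain ⟨l, ⟨-, hlc⟩, hl⟩ :=
    intermediate_value_Ico hac (hcont.mono (Icc_subset_Icc_right hcb)) ⟨hya, hyc⟩
  obtain ⟨r, ⟨hcr, hrb⟩, hr⟩ :=
    intermediate_value_Ioo' hcb (hcont.mono (Icc_subset_Icc_left hac)) ⟨hyb, hyc⟩
  have hlr : l < r := hlc.trans hcr
  refine ncard_eq_two.2 ⟨l, r, hlr.ne, Subset.antisymm ?_ ?_⟩
  · rintro x ⟨hxb, hx⟩
    rcases le_total x c with hxc | hcx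
    · exact .inl (hmono.injOn hxc hlc.le (hx.trans hl.symm))
    · exact .inr (hanti.injOn ⟨hcx, hxb.le⟩ ⟨hcr.le, hrb.le⟩ (hx.trans hr.symm))
  · rintro x (rfl | rfl)
    exacts [⟨hlr.trans hrb, hl⟩, ⟨hrb, hr⟩]

end Unimodal

/-- The left-hand side of the consistency equation on the branch `M < 0`, where `M|M| = -M²`. -/
def consistencyCubic (T M : ℝ) : ℝ :=
  T ^ 2 * M ^ 3 - T * (2 - T) * M ^ 2 + (1 - 2 * T) * M

/-- The smaller critical point of `consistencyCubic T` for `T > 0`, a local maximum; the other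
critical point is `1 / T`. -/
noncomputable def cubicPeak (T : ℝ) : ℝ :=
  (1 - 2 * T) / (3 * T)

/-- The value of `consistencyCubic T` at `cubicPeak T`; the critical parameter `T(m₀)` is defined by
`cubicPeakValue (T(m₀)) = |m₀|`. -/
noncomputable def cubicPeakValue (T : ℝ) : ℝ :=
  (2 * T - 1) ^ 2 * (T + 4) / (27 * T)

/-- The set of negative solutions `M` of the consistency equation with parameters `T` and `m`. -/
def negSolutions (T m : ℝ) : Set ℝ :=
  {M | M < 0 ∧ consistencyCubic T M = m}

variable {T m : ℝ}

theorem hasDerivAt_consistencyCubic (T M : ℝ) :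
    HasDerivAt (consistencyCubic T) ((3 * T * M + 2 * T - 1) * (T * M - 1)) M := by
  have hcubic := (((hasDerivAt_pow 3 M).const_mul (T ^ 2)).sub
    ((hasDerivAt_pow 2 M).const_mul (T * (2 - T)))).add ((hasDerivAt_id M).const_mul (1 - 2 * T))
  refine hcubic.congr_deriv ?_
  norm_num
  ring

theorem continuous_consistencyCubic (T : ℝ) : Continuous (consistencyCubic T) :=
  continuous_iff_continuousAt.2 fun M => (hasDerivAt_consistencyCubic T M).continuousAt

theorem consistencyCubic_zero (T : ℝ) : consistencyCubic T 0 = 0 := by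
  simp [consistencyCubic]

theorem consistencyCubic_neg_two_neg (T : ℝ) : consistencyCubic T (-2) < 0 := by
  have hsq : consistencyCubic T (-2) = -((2 * T + 1) ^ 2 + 1) := by
    unfold consistencyCubic
    ring
  rw [hsq, neg_lt_zero]
  positivity

theorem consistencyCubic_cubicPeak (hT : T ≠ 0) :
    consistencyCubic T (cubicPeak T) = cubicPeakValue T := by
  unfold consistencyCubic cubicPeak cubicPeakValue
  field_simp
  ring

theorem neg_two_lt_cubicPeak (hT : 0 < T) : -2 < cubicPeak T := by
  rw [cubicPeak, lt_div_iff₀ (by positivity)]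
  linarith

theorem cubicPeak_nonneg (hT : 0 < T) (hT_half : T ≤ 1 / 2) : 0 ≤ cubicPeak T :=
  div_nonneg (by linarith) (by positivity)

theorem cubicPeak_neg (hT : 1 / 2 < T) : cubicPeak T < 0 :=
  div_neg_of_neg_of_pos (by linarith) (by linarith)

theorem strictMonoOn_consistencyCubic (hT : 0 < T) :
    StrictMonoOn (consistencyCubic T) (Iic (cubicPeak T)) := by
  refine strictMonoOn_of_deriv_pos (convex_Iic _) (continuous_consistencyCubic T).continuousOn ?_
  intro M hM
  rw [interior_Iic, mem_Iio, cubicPeak, lt_div_iff₀ (by positivity)] at hM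
  rw [(hasDerivAt_consistencyCubic T M).deriv]
  exact mul_pos_of_neg_of_neg (by linarith) (by linarith)

theorem strictAntiOn_consistencyCubic (hT : 0 < T) :
    StrictAntiOn (consistencyCubic T) (Icc (cubicPeak T) (1 / T)) := by
  refine strictAntiOn_of_deriv_neg (convex_Icc _ _) (continuous_consistencyCubic T).continuousOn ?_
  intro M hM
  rw [interior_Icc, mem_Ioo, cubicPeak, div_lt_iff₀ (by positivity), lt_div_iff₀ hT] at hM
  rw [(hasDerivAt_consistencyCubic T M).deriv]
  exact mul_neg_of_pos_of_neg (by linarith) (by linarith)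

theorem strictAntiOn_consistencyCubic_Icc_zero (hT : 0 < T) :
    StrictAntiOn (consistencyCubic T) (Icc (cubicPeak T) 0) :=
  (strictAntiOn_consistencyCubic hT).mono (Icc_subset_Icc_right (by positivity))

theorem consistencyCubic_lt_cubicPeakValue {M : ℝ} (hT : 0 < T) (hM : M ≤ 0)
    (hM_peak : M ≠ cubicPeak T) : consistencyCubic T M < cubicPeakValue T :=
  consistencyCubic_cubicPeak hT.ne' ▸ apply_lt_apply_peak (strictMonoOn_consistencyCubic hT)
    (strictAntiOn_consistencyCubic_Icc_zero hT) hM hM_peak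

theorem strictMonoOn_cubicPeakValue : StrictMonoOn cubicPeakValue (Ici (1 / 2)) := by
  intro a (ha : 1 / 2 ≤ a) b _ hab
  have hsum : 1 < a + b := by linarith
  have hprod : 1 / 4 < a * b := by nlinarith
  have hfactor : 0 < (a + b) * (a * b) + 3 * (a * b) - 1 := by
    nlinarith [mul_pos (sub_pos.2 hsum) (sub_pos.2 hprod)]
  have hdiff : cubicPeakValue b - cubicPeakValue a =
      4 * (b - a) * ((a + b) * (a * b) + 3 * (a * b) - 1) / (27 * (a * b)) := by
    have ha0 : a ≠ 0 := by linarith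
    have hb0 : b ≠ 0 := by linarith
    unfold cubicPeakValue
    field_simp
    ring
  rw [← sub_pos, hdiff]
  have := sub_pos.2 hab
  positivity

theorem negSolutions_eq_empty_of_le_half (hT : 0 < T) (hT_half : T ≤ 1 / 2) (hm : 0 ≤ m) :
    negSolutions T m = ∅ := by
  refine eq_empty_of_forall_notMem ?_
  rintro M ⟨hM, hMm⟩
  have hpeak : 0 ≤ cubicPeak T := cubicPeak_nonneg hT hT_half
  have hneg : consistencyCubic T M < consistencyCubic T 0 :=
    strictMonoOn_consistencyCubic hT (hM.le.trans hpeak) hpeak hM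
  rw [hMm, consistencyCubic_zero] at hneg
  exact hneg.not_ge hm

theorem negSolutions_eq_empty_of_cubicPeakValue_lt (hT : 0 < T) (hm : cubicPeakValue T < m) :
    negSolutions T m = ∅ := by
  refine eq_empty_of_forall_notMem ?_
  rintro M ⟨hM, rfl⟩
  rcases eq_or_ne M (cubicPeak T) with rfl | hM_peak
  · exact hm.ne' (consistencyCubic_cubicPeak hT.ne')
  · exact hm.not_gt (consistencyCubic_lt_cubicPeakValue hT hM.le hM_peak)

theorem negSolutions_cubicPeakValue (hT : 1 / 2 < T) :
    negSolutions T (cubicPeakValue T) = {cubicPeak T} := by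
  have hT0 : 0 < T := by linarith
  refine Subset.antisymm ?_ ?_
  · rintro M ⟨hM, hM_value⟩
    by_contra hM_peak
    exact (consistencyCubic_lt_cubicPeakValue hT0 hM.le hM_peak).ne hM_value
  · exact singleton_subset_iff.2 ⟨cubicPeak_neg hT, consistencyCubic_cubicPeak hT0.ne'⟩

theorem ncard_negSolutions_eq_two (hT : 1 / 2 < T) (hm : 0 < m) (hm_peak : m < cubicPeakValue T) :
    (negSolutions T m).ncard = 2 := by
  have hT0 : 0 < T := by linarith
  refine ncard_level_eq_two_of_lt_peak (neg_two_lt_cubicPeak hT0).le (cubicPeak_neg hT).le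
    (continuous_consistencyCubic T).continuousOn (strictMonoOn_consistencyCubic hT0)
    (strictAntiOn_consistencyCubic_Icc_zero hT0)
    ((consistencyCubic_neg_two_neg T).trans hm).le ?_ ?_
  · rwa [consistencyCubic_zero]
  · rwa [consistencyCubic_cubicPeak hT0.ne']

theorem half_lt_of_cubicPeakValue_pos (hT : 1 / 2 ≤ T) (hpos : 0 < cubicPeakValue T) :
    1 / 2 < T := by
  refine hT.lt_of_ne ?_
  rintro rfl
  norm_num [cubicPeakValue] at hpos

theorem stmt_3_general (T m₀ Tm : ℝ) (hT : 0 < T) (hm₀ : 0 < m₀) (hTm : 1 / 2 ≤ Tm)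
    (hm₀_eq : m₀ = cubicPeakValue Tm) :
    (T < Tm → negSolutions T m₀ = ∅) ∧
    (T = Tm → (negSolutions T m₀).ncard = 1) ∧
    (Tm < T → (negSolutions T m₀).ncard = 2) := by
  subst hm₀_eq
  have hTm_half : 1 / 2 < Tm := half_lt_of_cubicPeakValue_pos hTm hm₀
  refine ⟨fun hlt => ?_, ?_, fun hgt => ?_⟩
  · rcases le_total T (1 / 2) with hT_half | hT_half
    · exact negSolutions_eq_empty_of_le_half hT hT_half hm₀.le
    · exact negSolutions_eq_empty_of_cubicPeakValue_lt hT
        (strictMonoOn_cubicPeakValue hT_half hTm hlt)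
  · rintro rfl
    rw [negSolutions_cubicPeakValue hTm_half, ncard_singleton]
  · exact ncard_negSolutions_eq_two (hTm_half.trans hgt) hm₀
      (strictMonoOn_cubicPeakValue hTm (hTm.trans hgt.le) hgt)

/-- Let `T > 0` and `m₀ ∈ (0,1]`, and let `Tm ∈ [1/2,2]` be the (unique) solution of
`|m₀| = (2T−1)²(T+4)/(27T)` in `[1/2,2]`. Then the number of solutions `M < 0` of
`T²M³ − T(2−T)M² + (1−2T)M = m₀` is: zero if `T < Tm`, exactly one if `T = Tm`,
and exactly two if `T > Tm`. -/
theorem stmt_3 (T m₀ Tm : ℝ) (hT : 0 < T) (hm₀ : m₀ ∈ Set.Ioc (0:ℝ) 1)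
    (hTm : Tm ∈ Set.Icc (1/2 : ℝ) 2 ∧ |m₀| = (2*Tm - 1)^2 * (Tm + 4) / (27*Tm)) :
    (T < Tm →
      {M : ℝ | M < 0 ∧ T^2 * M^3 - T*(2 - T) * M^2 + (1 - 2*T) * M = m₀} = ∅) ∧
    (T = Tm →
      {M : ℝ | M < 0 ∧ T^2 * M^3 - T*(2 - T) * M^2 + (1 - 2*T) * M = m₀}.ncard = 1) ∧
    (Tm < T →
      {M : ℝ | M < 0 ∧ T^2 * M^3 - T*(2 - T) * M^2 + (1 - 2*T) * M = m₀}.ncard = 2) := by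
  exact stmt_3_general T m₀ Tm hT hm₀.1 hTm.1.1 (abs_of_pos hm₀.1 ▸ hTm.2)
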